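/- arXiv:1701.06423 — 3 statements merged into one kernel-verified Lean document; each statement's English description precedes it below -/
import Mathlib

section
/- Any finite Borel measure μ on X^p that is invariant under the action of the symmetric group S_p (permuting coordinates) is uniquely determined by the values ∫_{X^p} a^{⊗p} dμ for a ranging over any dense subset C of C₀(X), where a^{⊗p}(X₁,…,X_p) = Π_i a(X_i). -/
/-!
The difference of the two functionals `(v₁, …, v_p) ↦ ∫ ∏ vᵢ(xᵢ)` is a continuous multilinear
form `F` on `C₀(X, ℂ)`. It vanishes on the diagonal over the dense set `C`, hence on the whole
diagonal by continuity. Polarization, in the form that the `p`-th derivative of `a ↦ F(a, …, a)` is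
`v ↦ ∑_σ F(v ∘ σ)`, gives `∑_σ F(v ∘ σ) = 0`; since the measures are permutation invariant `F` is
symmetric, so `p! F(v) = 0` and `F = 0`.

Cut-off functions `gₙ ∈ C_c(X)` with `0 ≤ gₙ ≤ 1` and `gₙ → 1` pointwise come from a compact
exhaustion and Urysohn's lemma. Applying `F = 0` to `fᵢ gₙ` for bounded continuous `fᵢ`, dominated
convergence shows that both measures integrate `∏ fᵢ(xᵢ)` equally, and such products determine a
finite measure on the product since `X` is metrizable.
-/

open MeasureTheory
open scoped BigOperators

namespace SymmetricMeasure

open Filter Topology ZeroAtInfty BoundedContinuousFunction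

section

variable {X : Type*} [TopologicalSpace X]

lemma norm_apply_le (a : C₀(X, ℂ)) (x : X) : ‖a x‖ ≤ ‖a‖ :=
  (a.toBCF).norm_coe_le_norm x

lemma norm_prod_le {p : ℕ} (v : Fin p → C₀(X, ℂ)) (x : Fin p → X) :
    ‖∏ i, v i (x i)‖ ≤ ∏ i, ‖v i‖ := by
  rw [norm_prod]
  exact Finset.prod_le_prod (fun _ _ => norm_nonneg _) fun i _ => norm_apply_le _ _

lemma continuous_prod {p : ℕ} (v : Fin p → C₀(X, ℂ)) :
    Continuous fun x : Fin p → X => ∏ i, v i (x i) :=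
  continuous_finsetProd _ fun i _ => (v i).continuous.comp (continuous_apply i)

/-- The algebraic multilinear form `v ↦ ∏ vᵢ(xᵢ)` at a fixed point `x`. -/
noncomputable def prodEval {p : ℕ} (x : Fin p → X) :
    MultilinearMap ℂ (fun _ : Fin p => C₀(X, ℂ)) ℂ :=
  (MultilinearMap.mkPiAlgebra ℂ (Fin p) ℂ).compLinearMap fun i =>
    { toFun := fun a => a (x i)
      map_add' := fun _ _ => rfl
      map_smul' := fun _ _ => rfl }

lemma prodEval_apply {p : ℕ} (x : Fin p → X) (v : Fin p → C₀(X, ℂ)) :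
    prodEval x v = ∏ i, v i (x i) := by
  simp [prodEval]

variable [SecondCountableTopology X] [MeasurableSpace X] [BorelSpace X]

lemma integrable_prod {p : ℕ} (μ : Measure (Fin p → X)) [IsFiniteMeasure μ]
    (v : Fin p → C₀(X, ℂ)) : Integrable (fun x => ∏ i, v i (x i)) μ :=
  Integrable.of_bound (continuous_prod v).measurable.aestronglyMeasurable _
    (ae_of_all _ (norm_prod_le v))

/-- The continuous multilinear form `(v₁, …, v_p) ↦ ∫ ∏ vᵢ(xᵢ) dμ` on `C₀(X, ℂ)`. -/
noncomputable def tensorIntegral {p : ℕ} (μ : Measure (Fin p → X)) [IsFiniteMeasure μ] :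
    ContinuousMultilinearMap ℂ (fun _ : Fin p => C₀(X, ℂ)) ℂ :=
  MultilinearMap.mkContinuous
    { toFun := fun v => ∫ x, ∏ i, v i (x i) ∂μ
      map_update_add' := by
        intro _ v i a b
        rw [← integral_add (integrable_prod μ _) (integrable_prod μ _)]
        simp only [← prodEval_apply, MultilinearMap.map_update_add]
      map_update_smul' := by
        intro _ v i c a
        rw [← integral_smul]
        simp only [← prodEval_apply, MultilinearMap.map_update_smul] }
    (μ.real Set.univ) (by
      intro v
      rw [mul_comm]
      exact norm_integral_le_of_norm_le_const (ae_of_all _ (norm_prod_le v)))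

lemma tensorIntegral_apply {p : ℕ} (μ : Measure (Fin p → X)) [IsFiniteMeasure μ]
    (v : Fin p → C₀(X, ℂ)) : tensorIntegral μ v = ∫ x, ∏ i, v i (x i) ∂μ := rfl

lemma tensorIntegral_perm {p : ℕ} (μ : Measure (Fin p → X)) [IsFiniteMeasure μ]
    (hμ : ∀ σ : Equiv.Perm (Fin p), Measure.map (fun x => x ∘ σ) μ = μ)
    (v : Fin p → C₀(X, ℂ)) (σ : Equiv.Perm (Fin p)) :
    tensorIntegral μ (fun i => v (σ i)) = tensorIntegral μ v := by
  have hm : Measurable fun x : Fin p → X => x ∘ (σ⁻¹ : Equiv.Perm (Fin p)) :=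
    measurable_pi_lambda _ fun i => measurable_pi_apply _
  rw [tensorIntegral_apply, tensorIntegral_apply]
  conv_rhs => rw [← hμ σ⁻¹]
  rw [integral_map hm.aemeasurable (continuous_prod v).measurable.aestronglyMeasurable]
  congr 1 with x
  rw [← Equiv.prod_comp σ fun j => v j ((x ∘ (σ⁻¹ : Equiv.Perm (Fin p))) j)]
  simp

/-- Polarization: a form symmetric under permutations that vanishes on the diagonal over a dense
set vanishes. -/
lemma eq_zero_of_diagonal {E : Type*} [NormedAddCommGroup E] [NormedSpace ℂ E] {p : ℕ}
    (F : ContinuousMultilinearMap ℂ (fun _ : Fin p => E) ℂ)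
    (hF : ∀ (v : Fin p → E) (σ : Equiv.Perm (Fin p)), F (fun i => v (σ i)) = F v)
    {C : Set E} (hC : Dense C) (h : ∀ a ∈ C, F (fun _ => a) = 0) (v : Fin p → E) :
    F v = 0 := by
  have h0 : (fun a : E => F fun _ => a) = fun _ => 0 :=
    Continuous.ext_on hC (F.cont.comp (continuous_pi fun _ => continuous_id)) continuous_const h
  have h1 := F.iteratedFDeriv_comp_diagonal 0 v
  rw [h0] at h1
  have h2 : iteratedFDeriv ℂ p (fun _ : E => (0 : ℂ)) = 0 := iteratedFDeriv_fun_zero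
  rw [h2] at h1
  simp only [hF, Finset.sum_const, Finset.card_univ, Fintype.card_perm, Fintype.card_fin] at h1
  simpa [Nat.factorial_ne_zero] using h1.symm

/-- Compactly supported cut-offs, bounded by `1`, that at each point are eventually equal to `1`. -/
lemma exists_cutoff (X : Type*) [TopologicalSpace X] [LocallyCompactSpace X] [T2Space X]
    [SecondCountableTopology X] :
    ∃ g : ℕ → C(X, ℝ), (∀ n, HasCompactSupport (g n)) ∧ (∀ n x, ‖g n x‖ ≤ 1) ∧
      ∀ x, ∀ᶠ n in atTop, g n x = 1 := by
  let K : CompactExhaustion X := default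
  choose g h1 _ hc h01 using fun n =>
    exists_continuous_one_zero_of_isCompact (K.isCompact n) isClosed_empty (Set.disjoint_empty _)
  refine ⟨g, hc, fun n x => ?_, fun x => ?_⟩
  · rw [Real.norm_of_nonneg (h01 n x).1]
    exact (h01 n x).2
  · obtain ⟨N, hN⟩ := K.exists_mem x
    filter_upwards [eventually_ge_atTop N] with n hn
    exact h1 n (K.subset hn hN)

/-- The product of a bounded continuous real function and a compactly supported cut-off,
as an element of `C₀(X, ℂ)`. -/
noncomputable def cut (f : X →ᵇ ℝ) (g : C(X, ℝ)) (hg : HasCompactSupport g) : C₀(X, ℂ) where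
  toFun x := ((f x * g x : ℝ) : ℂ)
  continuous_toFun := Complex.continuous_ofReal.comp (f.continuous.mul g.continuous)
  zero_at_infty' := by
    have : HasCompactSupport fun x => ((f x * g x : ℝ) : ℂ) :=
      (hg.mul_left (f := f)).comp_left (g := fun r : ℝ => (r : ℂ)) (by simp)
    exact this.is_zero_at_infty

lemma integral_prod_eq [LocallyCompactSpace X] [T2Space X] {p : ℕ}
    (μ ν : Measure (Fin p → X)) [IsFiniteMeasure μ] [IsFiniteMeasure ν]
    (h : ∀ v : Fin p → C₀(X, ℂ), ∫ x, ∏ i, v i (x i) ∂μ = ∫ x, ∏ i, v i (x i) ∂ν)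
    (f : Fin p → X →ᵇ ℝ) :
    ∫ x, ∏ i, f i (x i) ∂μ = ∫ x, ∏ i, f i (x i) ∂ν := by
  obtain ⟨g, hc, hb, h1⟩ := exists_cutoff X
  have lim : ∀ (ξ : Measure (Fin p → X)) [IsFiniteMeasure ξ],
      Tendsto (fun n => ∫ x, ∏ i, cut (f i) (g n) (hc n) (x i) ∂ξ) atTop
        (𝓝 (∫ x, ((∏ i, f i (x i) : ℝ) : ℂ) ∂ξ)) := by
    intro ξ _
    refine tendsto_integral_of_dominated_convergence (fun _ => ∏ i, ‖f i‖)
      (fun n => (continuous_prod _).measurable.aestronglyMeasurable) (integrable_const _)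
      (fun n => ae_of_all _ fun x => ?_) (ae_of_all _ fun x => ?_)
    · rw [norm_prod]
      refine Finset.prod_le_prod (fun _ _ => norm_nonneg _) fun i _ => ?_
      change ‖((f i (x i) * g n (x i) : ℝ) : ℂ)‖ ≤ _
      rw [Complex.norm_real, norm_mul]
      exact (mul_le_of_le_one_right (norm_nonneg _) (hb n _)).trans ((f i).norm_coe_le_norm _)
    · refine tendsto_const_nhds.congr' ?_
      filter_upwards [eventually_all.2 fun i => h1 (x i)] with n hn
      rw [Complex.ofReal_prod]
      refine Finset.prod_congr rfl fun i _ => ?_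
      change _ = ((f i (x i) * g n (x i) : ℝ) : ℂ)
      rw [hn i, mul_one]
  have := tendsto_nhds_unique (lim μ) (by simpa only [h] using lim ν)
  rw [integral_complex_ofReal, integral_complex_ofReal] at this
  exact_mod_cast this

/-- A finite measure on `X^p` is determined by integrals of products of bounded
continuous functions of one coordinate. -/
lemma ext_of_integral_prod [LocallyCompactSpace X] [T2Space X] {p : ℕ}
    (μ ν : Measure (Fin p → X)) [IsFiniteMeasure μ] [IsFiniteMeasure ν]
    (h : ∀ f : Fin p → X →ᵇ ℝ, ∫ x, ∏ i, f i (x i) ∂μ = ∫ x, ∏ i, f i (x i) ∂ν) :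
    μ = ν := by
  let _ := TopologicalSpace.metrizableSpaceMetric X
  -- The library fact is stated for `(Π i, X i) × T`; it is applied with `T` a point.
  let e : (Fin p → X) → (Fin p → X) × Unit := fun x => (x, ())
  have he : Measurable e := measurable_id.prodMk measurable_const
  have hm : μ.map e = ν.map e := by
    refine Measure.ext_of_integral_prod_mul_boundedContinuousFunction fun f g => ?_
    have hs : Measurable fun q : (Fin p → X) × Unit => (∏ i, f i (q.1 i)) * g q.2 := by
      refine Measurable.mul (Finset.measurable_fun_prod _ fun i _ => ?_)
        (g.continuous.measurable.comp measurable_snd)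
      exact (f i).continuous.measurable.comp ((measurable_pi_apply i).comp measurable_fst)
    rw [integral_map he.aemeasurable hs.aestronglyMeasurable,
      integral_map he.aemeasurable hs.aestronglyMeasurable]
    simp only [e, integral_mul_const, h f]
  have hf := congrArg (Measure.map Prod.fst) hm
  rw [Measure.map_map measurable_fst he, Measure.map_map measurable_fst he] at hf
  simpa [e, Function.comp_def] using hf

end

end SymmetricMeasure

/-- A finite Borel measure on `X^p` which is invariant under the permutation action of the
symmetric group `S_p` is uniquely determined by the integrals `∫ a^{⊗p} dμ` for `a` in any
dense subset `C` of `C₀(X)`, where `a^{⊗p}(X₁,…,X_p) = Π_i a(X_i)`. -/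
theorem symmetric_measure_determined_by_tensor_powers {X : Type*} [TopologicalSpace X]
    [LocallyCompactSpace X] [T2Space X] [SecondCountableTopology X]
    [MeasurableSpace X] [BorelSpace X] (p : ℕ)
    (μ ν : Measure (Fin p → X)) [IsFiniteMeasure μ] [IsFiniteMeasure ν]
    (hμ : ∀ σ : Equiv.Perm (Fin p), Measure.map (fun x => x ∘ σ) μ = μ)
    (hν : ∀ σ : Equiv.Perm (Fin p), Measure.map (fun x => x ∘ σ) ν = ν)
    (C : Set (ZeroAtInftyContinuousMap X ℂ)) (hC : Dense C)
    (h : ∀ a ∈ C, ∫ x, ∏ i, a (x i) ∂μ = ∫ x, ∏ i, a (x i) ∂ν) :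
    μ = ν := by
  refine SymmetricMeasure.ext_of_integral_prod μ ν
    (SymmetricMeasure.integral_prod_eq μ ν fun v => sub_eq_zero.1 ?_)
  refine SymmetricMeasure.eq_zero_of_diagonal
    (SymmetricMeasure.tensorIntegral μ - SymmetricMeasure.tensorIntegral ν)
    (fun v σ => ?_) hC (fun a ha => sub_eq_zero.2 (h a ha)) v
  exact congrArg₂ (· - ·) (SymmetricMeasure.tensorIntegral_perm μ hμ v σ)
    (SymmetricMeasure.tensorIntegral_perm ν hν v σ)
end

section
/- For every positive integer p, the p-th Bell number satisfies B_p < (0.792·p / ln(p+1))^p. -/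
/-!
The Bell numbers satisfy Dobinski's formula `e * B_n = ∑ k ^ n / k!`. The elementary inequality
`y ≤ exp (y - 1)` with `y = t k / n` gives `k ^ n ≤ (n / t) ^ n * exp (-n) * exp (t k)`, and summing
over `k` yields, for every `t > 0`, the saddle-point type bound
`B_n ≤ (n / t) ^ n * exp (-n) * exp (exp t - 1)` (`natBell_le_exp`).

The choice `t = (3 / 4) * log (n + 1)` proves the theorem for `n ≥ 19`, since then
`exp t - 1 ≤ 0.473 * n` and `(4 / 3) * exp (-0.527) < 0.792` (`natBell_lt_of_large`).
The remaining values `n ≤ 18` are checked numerically from the exact Bell numbers and rational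
upper bounds for `log (n + 1)` (`natBell_lt_of_small`).

That the number of partitions of a set is at most Mathlib's recursively defined `Nat.bell` follows
by removing the block that contains a given element (`card_finpartition_le`).
-/

/-- The Bell number `B_p`: the total number of partitions of a set with `p` elements. -/
noncomputable def bell (p : ℕ) : ℕ :=
  Nat.card (Finpartition (Finset.univ : Finset (Fin p)))

/-! ### Counting partitions by the block of an element -/

/-- Every partition of `insert a s` arises from some `t ⊆ s` and a partition of `s \ t` by adding
the block `insert a t`. -/
lemma card_finpartition_insert_le {α : Type*} [DecidableEq α] (a : α) (s : Finset α) (ha : a ∉ s) :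
    Fintype.card (Finpartition (insert a s)) ≤
      ∑ t ∈ s.powerset, Fintype.card (Finpartition (s \ t)) := by
  let g : (Σ t : s.powerset, Finpartition (s \ t.1)) → Finpartition (insert a s) := fun x =>
    x.2.extend (b := insert a x.1.1) (Finset.insert_ne_empty _ _)
      (by
        rw [Finset.disjoint_insert_right]
        exact ⟨fun h => ha (Finset.sdiff_subset h), Finset.sdiff_disjoint⟩)
      (by
        have := Finset.mem_powerset.1 x.1.2
        ext y
        simp only [Finset.sup_eq_union, Finset.mem_union, Finset.mem_sdiff, Finset.mem_insert]
        have := @this y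
        tauto)
  have hg : Function.Surjective g := by
    intro P
    have haP : a ∈ P.part a := P.mem_part (Finset.mem_insert_self a s)
    have hpart : P.part a ∈ P.parts := P.part_mem.2 (Finset.mem_insert_self a s)
    have hsub : P.part a ⊆ insert a s := P.le hpart
    have ht : (P.part a).erase a ⊆ s := by
      intro y hy
      rw [Finset.mem_erase] at hy
      exact (Finset.mem_insert.1 (hsub hy.2)).resolve_left hy.1
    have hEq : insert a s \ P.part a = s \ (P.part a).erase a := by
      ext y
      simp only [Finset.mem_sdiff, Finset.mem_insert, Finset.mem_erase]
      by_cases hy : y = a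
      · subst hy; simp [haP, ha]
      · simp [hy]
    refine ⟨⟨⟨(P.part a).erase a, Finset.mem_powerset.2 ht⟩, (P.avoid (P.part a)).copy hEq⟩, ?_⟩
    apply Finpartition.ext
    simp only [g, Finpartition.extend_parts, Finpartition.copy_parts, Finset.insert_erase haP]
    ext u
    simp only [Finset.mem_insert, Finpartition.mem_avoid]
    constructor
    · rintro (rfl | ⟨d, hd, hnd, rfl⟩)
      · exact hpart
      · have hne : d ≠ P.part a := by rintro rfl; exact hnd le_rfl
        have hdis : Disjoint d (P.part a) := P.disjoint hd hpart hne
        rwa [Finset.sdiff_eq_self_of_disjoint hdis]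
    · intro hu
      by_cases hne : u = P.part a
      · exact Or.inl hne
      · have hdis : Disjoint u (P.part a) := P.disjoint hu hpart hne
        refine Or.inr ⟨u, hu, fun hle => P.ne_bot hu (hdis.eq_bot_of_le hle), ?_⟩
        exact Finset.sdiff_eq_self_of_disjoint hdis
  calc Fintype.card (Finpartition (insert a s))
      ≤ Fintype.card (Σ t : s.powerset, Finpartition (s \ t.1)) := Fintype.card_le_of_surjective g hg
    _ = ∑ t ∈ s.powerset, Fintype.card (Finpartition (s \ t)) := by
        rw [Fintype.card_sigma]
        exact Finset.sum_coe_sort s.powerset (fun t => Fintype.card (Finpartition (s \ t)))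

/-- The number of partitions of an `n`-set is bounded by the recursively defined Bell number, by
summing over the block that contains a chosen element. -/
lemma card_finpartition_le {α : Type*} [DecidableEq α] (n : ℕ) :
    ∀ s : Finset α, s.card = n → Fintype.card (Finpartition s) ≤ Nat.bell n := by
  induction n using Nat.strong_induction_on with
  | _ n ih =>
    intro s hs
    rcases s.eq_empty_or_nonempty with rfl | ⟨a, has⟩
    · obtain rfl : n = 0 := by simpa using hs.symm
      rw [Nat.bell_zero]
      exact (Fintype.card_unique (α := Finpartition (⊥ : Finset α))).le
    · obtain ⟨r, har, rfl⟩ : ∃ r, a ∉ r ∧ insert a r = s :=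
        ⟨s.erase a, Finset.notMem_erase a s, Finset.insert_erase has⟩
      rw [Finset.card_insert_of_notMem har] at hs
      subst hs
      refine (card_finpartition_insert_le a r har).trans ?_
      calc ∑ t ∈ r.powerset, Fintype.card (Finpartition (r \ t))
          ≤ ∑ t ∈ r.powerset, Nat.bell (r.card - t.card) := by
            refine Finset.sum_le_sum fun t ht => ?_
            exact ih _ (by omega) _ (Finset.card_sdiff_of_subset (Finset.mem_powerset.1 ht))
        _ = Nat.bell (r.card + 1) := by
            rw [Finset.sum_powerset_apply_card (fun k => Nat.bell (r.card - k)), Nat.bell_succ,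
              Nat.range_succ_eq_Iic]
            simp

lemma bell_le_natBell (p : ℕ) : bell p ≤ Nat.bell p := by
  rw [bell, Nat.card_eq_fintype_card]
  exact card_finpartition_le p _ (by simp)

/-! ### Dobinski's formula and the exponential bound -/

lemma summable_pow_div_factorial' (n : ℕ) :
    Summable fun k : ℕ => (k : ℝ) ^ n / (k.factorial : ℝ) := by
  refine Summable.of_nonneg_of_le (fun k => by positivity) (fun k => ?_)
    ((Real.summable_pow_div_factorial (Real.exp 1)).mul_left (n.factorial : ℝ))
  have h := Real.pow_div_factorial_le_exp (k : ℝ) (by positivity) n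
  rw [div_le_iff₀ (by positivity)] at h
  rw [← mul_div_assoc, ← Real.exp_nat_mul, mul_one]
  gcongr
  linarith

/-- Dobinski's formula. Both sides satisfy the same recurrence: shifting the index turns
`∑ k ^ (n + 1) / k!` into `∑ (k + 1) ^ n / k!`, which the binomial theorem expands. -/
lemma dobinski (n : ℕ) :
    ∑' k : ℕ, (k : ℝ) ^ n / (k.factorial : ℝ) = Real.exp 1 * Nat.bell n := by
  induction n using Nat.strong_induction_on with
  | _ n ih =>
    rcases n with _ | n
    · rw [Real.exp_eq_exp_ℝ, NormedSpace.exp_eq_tsum_div]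
      simp
    · rw [(summable_pow_div_factorial' (n + 1)).tsum_eq_zero_add]
      have h1 : ∀ k : ℕ, ((k + 1 : ℕ) : ℝ) ^ (n + 1) / ((k + 1).factorial : ℝ) =
          ∑ i ∈ Finset.range (n + 1), (n.choose i : ℝ) * ((k : ℝ) ^ i / (k.factorial : ℝ)) := by
        intro k
        have hk : ((k + 1 : ℕ) : ℝ) ≠ 0 := by positivity
        rw [Nat.factorial_succ, Nat.cast_mul, pow_succ', mul_div_mul_left _ _ hk, Nat.cast_succ,
          add_pow, Finset.sum_div]
        refine Finset.sum_congr rfl fun i _ => ?_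
        simp only [one_pow, mul_one]
        ring
      simp only [h1]
      rw [Summable.tsum_finsetSum fun i _ => (summable_pow_div_factorial' i).mul_left _]
      simp only [tsum_mul_left]
      rw [Nat.bell_succ, ← Nat.range_succ_eq_Iic,
        ← Finset.sum_range_reflect (fun i => n.choose i * Nat.bell (n - i))]
      push_cast
      rw [Finset.mul_sum]
      simp only [ne_eq, Nat.add_eq_zero_iff, one_ne_zero, and_false, not_false_eq_true, zero_pow,
        zero_div, zero_add]
      refine Finset.sum_congr rfl fun i hi => ?_
      have hi' : i ≤ n := by have := Finset.mem_range.1 hi; omega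
      rw [ih i (by omega)]
      have e2 : n - (n - i) = i := by omega
      rw [e2, Nat.choose_symm hi']
      ring

/-- The exponential moment bound: each term of Dobinski's series is dominated by the corresponding
term of a multiple of the series of `exp (exp t)`. -/
lemma natBell_le_exp (n : ℕ) (hn : 1 ≤ n) (t : ℝ) (ht : 0 < t) :
    (Nat.bell n : ℝ) ≤ (n / t) ^ n * Real.exp (-n) * Real.exp (Real.exp t - 1) := by
  have hn' : (0 : ℝ) < n := by exact_mod_cast hn
  have hterm : ∀ k : ℕ, (k : ℝ) ^ n / (k.factorial : ℝ) ≤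
      ((n / t) ^ n * Real.exp (-n)) * (Real.exp t ^ k / (k.factorial : ℝ)) := by
    intro k
    rw [← mul_div_assoc]
    gcongr
    have hy : t * k / n ≤ Real.exp (t * k / n - 1) := by
      have := Real.add_one_le_exp (t * k / n - 1)
      linarith
    calc (k : ℝ) ^ n = (n / t) ^ n * (t * k / n) ^ n := by
          rw [← mul_pow]; congr 1; field_simp
      _ ≤ (n / t) ^ n * Real.exp (t * k / n - 1) ^ n := by gcongr
      _ = (n / t) ^ n * Real.exp (-n) * Real.exp t ^ k := by
          rw [← Real.exp_nat_mul, ← Real.exp_nat_mul, mul_assoc, ← Real.exp_add]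
          congr 2
          field_simp
          ring
  have hsum := (summable_pow_div_factorial' n).tsum_le_tsum hterm
    ((Real.summable_pow_div_factorial (Real.exp t)).mul_left _)
  have hexp : ∑' k : ℕ, Real.exp t ^ k / (k.factorial : ℝ) = Real.exp (Real.exp t) := by
    rw [Real.exp_eq_exp_ℝ, NormedSpace.exp_eq_tsum_div]
  rw [dobinski, tsum_mul_left, hexp] at hsum
  rw [Real.exp_sub, ← mul_div_assoc, le_div_iff₀ (Real.exp_pos 1)]
  linarith

/-! ### Large `n` -/

lemma natBell_lt_of_large (n : ℕ) (hn : 19 ≤ n) :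
    (Nat.bell n : ℝ) < (0.792 * n / Real.log (n + 1)) ^ n := by
  have hn' : (19 : ℝ) ≤ n := by exact_mod_cast hn
  set L := Real.log (n + 1) with hL
  have hLpos : 0 < L := Real.log_pos (by linarith)
  -- `u` is the fourth root of `n + 1`, so that `exp (3 / 4 * L) = u ^ 3`.
  set u := Real.exp (L / 4) with hu
  have hu0 : 0 < u := Real.exp_pos _
  have hu4 : u ^ 4 = n + 1 := by
    rw [hu, ← Real.exp_nat_mul, ← Real.exp_log (show (0 : ℝ) < n + 1 by linarith)]
    congr 1
    push_cast
    ring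
  have hu3 : Real.exp (3 / 4 * L) = u ^ 3 := by
    rw [hu, ← Real.exp_nat_mul]
    congr 1
    push_cast
    ring
  have hcu : 1 ≤ 0.473 * u := by
    by_contra! h
    have h4 : (0.473 * u) ^ 4 < 1 := pow_lt_one₀ (by positivity) h (by norm_num)
    rw [mul_pow, hu4] at h4
    norm_num at h4
    linarith
  have hE : Real.exp (3 / 4 * L) - 1 ≤ n * 0.473 := by
    rw [hu3, show (n : ℝ) = u ^ 4 - 1 by linarith]
    nlinarith [mul_le_mul_of_nonneg_left hcu (pow_pos hu0 3).le]
  have hnum : 4 / 3 * Real.exp (-0.527) < 0.792 := by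
    have h := Real.sum_le_exp_of_nonneg (show (0 : ℝ) ≤ 0.527 by norm_num) 6
    have h' : (4 / 3 / 0.792 : ℝ) < Real.exp 0.527 :=
      lt_of_lt_of_le (by norm_num [Finset.sum_range_succ, Nat.factorial]) h
    rw [Real.exp_neg, ← div_eq_mul_inv, div_lt_iff₀ (Real.exp_pos _)]
    rw [div_lt_iff₀ (by norm_num)] at h'
    linarith
  calc (Nat.bell n : ℝ)
      ≤ (n / (3 / 4 * L)) ^ n * Real.exp (-n) * Real.exp (Real.exp (3 / 4 * L) - 1) :=
        natBell_le_exp n (by omega) _ (by positivity)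
    _ ≤ (n / (3 / 4 * L)) ^ n * Real.exp (-n) * Real.exp (n * 0.473) := by gcongr
    _ = (4 / 3 * Real.exp (-0.527) * n / L) ^ n := by
        rw [mul_assoc, ← Real.exp_add,
          show -(n : ℝ) + n * 0.473 = n * (-0.527) by ring, Real.exp_nat_mul, ← mul_pow]
        congr 1
        field_simp
    _ < (0.792 * n / L) ^ n := by
        have : n ≠ 0 := by omega
        gcongr

/-! ### Small `n` -/

/-- Reduction of a small case to rational arithmetic: `q` is an upper bound for `log (n + 1)`,
certified by a partial sum of the exponential series at `q`. -/
lemma lt_of_rational_bound (n b : ℕ) (q : ℝ) (hn : 1 ≤ n) (hq : 0 < q)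
    (hlog : (n : ℝ) + 1 ≤ ∑ i ∈ Finset.range 20, q ^ i / (i.factorial : ℝ))
    (hb : (b : ℝ) < (0.792 * n / q) ^ n) :
    (b : ℝ) < (0.792 * n / Real.log (n + 1)) ^ n := by
  have hn' : (1 : ℝ) ≤ n := by exact_mod_cast hn
  have hle : Real.log (n + 1) ≤ q := by
    rw [Real.log_le_iff_le_exp (by linarith)]
    exact hlog.trans (Real.sum_le_exp_of_nonneg hq.le 20)
  have hpos : 0 < Real.log (n + 1) := Real.log_pos (by linarith)
  refine hb.trans_le ?_
  gcongr

lemma natBell_lt_of_small (n : ℕ) (h1 : 1 ≤ n) (hn : n ≤ 18) :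
    (Nat.bell n : ℝ) < (0.792 * n / Real.log (n + 1)) ^ n := by
  have b0 : Nat.bell 0 = 1 := Nat.bell_zero
  have b1 : Nat.bell 1 = 1 := by
    rw [Nat.bell_succ, ← Nat.range_succ_eq_Iic]
    simp [Nat.choose, b0]
  have b2 : Nat.bell 2 = 2 := by
    rw [Nat.bell_succ, ← Nat.range_succ_eq_Iic]
    simp [Finset.sum_range_succ, Nat.choose, b0, b1]
  have b3 : Nat.bell 3 = 5 := by
    rw [Nat.bell_succ, ← Nat.range_succ_eq_Iic]
    simp [Finset.sum_range_succ, Nat.choose, b0, b1, b2]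
  have b4 : Nat.bell 4 = 15 := by
    rw [Nat.bell_succ, ← Nat.range_succ_eq_Iic]
    simp [Finset.sum_range_succ, Nat.choose, b0, b1, b2, b3]
  have b5 : Nat.bell 5 = 52 := by
    rw [Nat.bell_succ, ← Nat.range_succ_eq_Iic]
    simp [Finset.sum_range_succ, Nat.choose, b0, b1, b2, b3, b4]
  have b6 : Nat.bell 6 = 203 := by
    rw [Nat.bell_succ, ← Nat.range_succ_eq_Iic]
    simp [Finset.sum_range_succ, Nat.choose, b0, b1, b2, b3, b4, b5]
  have b7 : Nat.bell 7 = 877 := by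
    rw [Nat.bell_succ, ← Nat.range_succ_eq_Iic]
    simp [Finset.sum_range_succ, Nat.choose, b0, b1, b2, b3, b4, b5, b6]
  have b8 : Nat.bell 8 = 4140 := by
    rw [Nat.bell_succ, ← Nat.range_succ_eq_Iic]
    simp [Finset.sum_range_succ, Nat.choose, b0, b1, b2, b3, b4, b5, b6, b7]
  have b9 : Nat.bell 9 = 21147 := by
    rw [Nat.bell_succ, ← Nat.range_succ_eq_Iic]
    simp [Finset.sum_range_succ, Nat.choose, b0, b1, b2, b3, b4, b5, b6, b7, b8]
  have b10 : Nat.bell 10 = 115975 := by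
    rw [Nat.bell_succ, ← Nat.range_succ_eq_Iic]
    simp [Finset.sum_range_succ, Nat.choose, b0, b1, b2, b3, b4, b5, b6, b7, b8, b9]
  have b11 : Nat.bell 11 = 678570 := by
    rw [Nat.bell_succ, ← Nat.range_succ_eq_Iic]
    simp [Finset.sum_range_succ, Nat.choose, b0, b1, b2, b3, b4, b5, b6, b7, b8, b9, b10]
  have b12 : Nat.bell 12 = 4213597 := by
    rw [Nat.bell_succ, ← Nat.range_succ_eq_Iic]
    simp [Finset.sum_range_succ, Nat.choose, b0, b1, b2, b3, b4, b5, b6, b7, b8, b9, b10, b11]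
  have b13 : Nat.bell 13 = 27644437 := by
    rw [Nat.bell_succ, ← Nat.range_succ_eq_Iic]
    simp [Finset.sum_range_succ, Nat.choose, b0, b1, b2, b3, b4, b5, b6, b7, b8, b9, b10, b11, b12]
  have b14 : Nat.bell 14 = 190899322 := by
    rw [Nat.bell_succ, ← Nat.range_succ_eq_Iic]
    simp [Finset.sum_range_succ, Nat.choose, b0, b1, b2, b3, b4, b5, b6, b7, b8, b9, b10, b11, b12, b13]
  have b15 : Nat.bell 15 = 1382958545 := by
    rw [Nat.bell_succ, ← Nat.range_succ_eq_Iic]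
    simp [Finset.sum_range_succ, Nat.choose, b0, b1, b2, b3, b4, b5, b6, b7, b8, b9, b10, b11, b12, b13, b14]
  have b16 : Nat.bell 16 = 10480142147 := by
    rw [Nat.bell_succ, ← Nat.range_succ_eq_Iic]
    simp [Finset.sum_range_succ, Nat.choose, b0, b1, b2, b3, b4, b5, b6, b7, b8, b9, b10, b11, b12, b13, b14, b15]
  have b17 : Nat.bell 17 = 82864869804 := by
    rw [Nat.bell_succ, ← Nat.range_succ_eq_Iic]
    simp [Finset.sum_range_succ, Nat.choose, b0, b1, b2, b3, b4, b5, b6, b7, b8, b9, b10, b11, b12, b13, b14, b15, b16]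
  have b18 : Nat.bell 18 = 682076806159 := by
    rw [Nat.bell_succ, ← Nat.range_succ_eq_Iic]
    simp [Finset.sum_range_succ, Nat.choose, b0, b1, b2, b3, b4, b5, b6, b7, b8, b9, b10, b11, b12, b13, b14, b15, b16, b17]
  interval_cases n
  · exact lt_of_rational_bound 1 _ 0.7 (by norm_num) (by norm_num)
      (by norm_num [Finset.sum_range_succ, Nat.factorial]) (by rw [b1]; norm_num)
  · exact lt_of_rational_bound 2 _ 1.1 (by norm_num) (by norm_num)
      (by norm_num [Finset.sum_range_succ, Nat.factorial]) (by rw [b2]; norm_num)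
  · exact lt_of_rational_bound 3 _ 1.387 (by norm_num) (by norm_num)
      (by norm_num [Finset.sum_range_succ, Nat.factorial]) (by rw [b3]; norm_num)
  · exact lt_of_rational_bound 4 _ 1.6095 (by norm_num) (by norm_num)
      (by norm_num [Finset.sum_range_succ, Nat.factorial]) (by rw [b4]; norm_num)
  · exact lt_of_rational_bound 5 _ 1.792 (by norm_num) (by norm_num)
      (by norm_num [Finset.sum_range_succ, Nat.factorial]) (by rw [b5]; norm_num)
  · exact lt_of_rational_bound 6 _ 1.95 (by norm_num) (by norm_num)
      (by norm_num [Finset.sum_range_succ, Nat.factorial]) (by rw [b6]; norm_num)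
  · exact lt_of_rational_bound 7 _ 2.1 (by norm_num) (by norm_num)
      (by norm_num [Finset.sum_range_succ, Nat.factorial]) (by rw [b7]; norm_num)
  · exact lt_of_rational_bound 8 _ 2.2 (by norm_num) (by norm_num)
      (by norm_num [Finset.sum_range_succ, Nat.factorial]) (by rw [b8]; norm_num)
  · exact lt_of_rational_bound 9 _ 2.31 (by norm_num) (by norm_num)
      (by norm_num [Finset.sum_range_succ, Nat.factorial]) (by rw [b9]; norm_num)
  · exact lt_of_rational_bound 10 _ 2.4 (by norm_num) (by norm_num)
      (by norm_num [Finset.sum_range_succ, Nat.factorial]) (by rw [b10]; norm_num)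
  · exact lt_of_rational_bound 11 _ 2.5 (by norm_num) (by norm_num)
      (by norm_num [Finset.sum_range_succ, Nat.factorial]) (by rw [b11]; norm_num)
  · exact lt_of_rational_bound 12 _ 2.6 (by norm_num) (by norm_num)
      (by norm_num [Finset.sum_range_succ, Nat.factorial]) (by rw [b12]; norm_num)
  · exact lt_of_rational_bound 13 _ 2.7 (by norm_num) (by norm_num)
      (by norm_num [Finset.sum_range_succ, Nat.factorial]) (by rw [b13]; norm_num)
  · exact lt_of_rational_bound 14 _ 2.8 (by norm_num) (by norm_num)
      (by norm_num [Finset.sum_range_succ, Nat.factorial]) (by rw [b14]; norm_num)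
  · exact lt_of_rational_bound 15 _ 2.8 (by norm_num) (by norm_num)
      (by norm_num [Finset.sum_range_succ, Nat.factorial]) (by rw [b15]; norm_num)
  · exact lt_of_rational_bound 16 _ 2.9 (by norm_num) (by norm_num)
      (by norm_num [Finset.sum_range_succ, Nat.factorial]) (by rw [b16]; norm_num)
  · exact lt_of_rational_bound 17 _ 2.9 (by norm_num) (by norm_num)
      (by norm_num [Finset.sum_range_succ, Nat.factorial]) (by rw [b17]; norm_num)
  · exact lt_of_rational_bound 18 _ 3.0 (by norm_num) (by norm_num)
      (by norm_num [Finset.sum_range_succ, Nat.factorial]) (by rw [b18]; norm_num)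

/-- For every positive integer `p`, `B_p < (0.792 p / ln (p+1))^p`. -/
theorem bell_lt_berend_tassa (p : ℕ) (hp : 1 ≤ p) :
    (bell p : ℝ) < (0.792 * p / Real.log (p + 1)) ^ p := by
  refine lt_of_le_of_lt (Nat.cast_le.2 (bell_le_natBell p)) ?_
  rcases le_or_gt p 18 with h | h
  · exact natBell_lt_of_small p hp h
  · exact natBell_lt_of_large p h
end

section
/- Let C be a self-adjoint trace-class operator on a separable Hilbert space Z with ‖C‖ < 1, with eigenvalues (λ_n). Then the bosonic second quantization Γ₊(C), acting as S₊ⁿ C^{⊗n} S₊ⁿ* on each symmetric n-particle sector, is trace class on the symmetric Fock space and Tr[Γ₊(C)] = Π_{n} 1/(1−λ_n) = exp(−Tr[log(1−C)]). -/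
/-!
`Γ₊(C)` is diagonal in the occupation number basis of the Fock space. Symmetrized tensors of
eigenvectors `e_{k 0} ⊗ ⋯ ⊗ e_{k (n-1)}` depend only on the multiset of the modes `k i`, are nonzero,
are orthogonal for different multisets, and are total because tensors of basis vectors are total
in `Z^{⊗n}` (`FockFramework.eq_zero_of_basis`). After normalization they form a Hilbert basis
indexed by `Multiset ℕ` (`FockFramework.occBasis`), and `Γ₊(C)` multiplies the vector of `s` by
`∏_{n ∈ s} λ_n` (`FockFramework.secondQuantization_occBasis`).

Since `∑ |λ_n| < ∞` and `|λ_n| ≤ ‖C‖ < 1`, expanding geometric series shows that these eigenvalues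
are absolutely summable over all multisets, with sum `∏ 1/(1-λ_n)` (`hasProd_geometric`). An operator
which is diagonal with absolutely summable eigenvalues has the sum of its eigenvalues as its trace
in every Hilbert basis (`trace_diag`). The exponential formula is obtained by taking logarithms
of the factors, which lie in the right half-plane (`tprod_eq_exp`).
-/


open scoped InnerProductSpace BigOperators

noncomputable section

/-- The sign `s_±(σ)`: `1` in the bosonic case, the signature in the fermionic case. -/
def permSign (fermionic : Bool) {n : ℕ} (σ : Equiv.Perm (Fin n)) : ℂ :=
  if fermionic then ((Equiv.Perm.sign σ : ℤ) : ℂ) else 1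

/-- An abstract bosonic (`fermionic = false`) or fermionic (`fermionic = true`) Fock space
over a one-particle Hilbert space `Z`: the completed Hilbert tensor powers `TP n = Z^{⊗n}`
with their elementary tensors and permutation actions, the operators `b ⊗ Id^{⊗n}`, and
the full Fock space `Γ_±(Z)` together with the (anti)symmetrized embeddings
`J n = S_±ⁿ : Z^{⊗n} → Γ_±(Z)` with mutually orthogonal ranges spanning a dense subspace. -/
structure FockFramework (fermionic : Bool) (Z : Type) [NormedAddCommGroup Z]
    [InnerProductSpace ℂ Z] [CompleteSpace Z] where
  /-- the completed `n`-fold Hilbert tensor power `Z^{⊗n}` -/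
  TP : ℕ → Type
  [instTPGroup : ∀ n, NormedAddCommGroup (TP n)]
  [instTPInner : ∀ n, InnerProductSpace ℂ (TP n)]
  [instTPComplete : ∀ n, CompleteSpace (TP n)]
  /-- the elementary tensors `f₁ ⊗ ⋯ ⊗ f_n` -/
  tvec : ∀ n, (Fin n → Z) → TP n
  tvec_inner : ∀ (n) (f g : Fin n → Z),
    ⟪tvec n f, tvec n g⟫_ℂ = ∏ i, ⟪f i, g i⟫_ℂ
  tvec_add : ∀ (n) (f : Fin n → Z) (i : Fin n) (y z : Z),
    tvec n (Function.update f i (y + z))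
      = tvec n (Function.update f i y) + tvec n (Function.update f i z)
  tvec_smul : ∀ (n) (f : Fin n → Z) (i : Fin n) (c : ℂ) (y : Z),
    tvec n (Function.update f i (c • y)) = c • tvec n (Function.update f i y)
  tvec_dense : ∀ n, Dense (↑(Submodule.span ℂ (Set.range (tvec n))) : Set (TP n))
  /-- the permutation action on `Z^{⊗n}` -/
  permAct : ∀ n, Equiv.Perm (Fin n) → (TP n →L[ℂ] TP n)
  permAct_tvec : ∀ (n) (σ : Equiv.Perm (Fin n)) (f : Fin n → Z),
    permAct n σ (tvec n f) = tvec n (f ∘ σ)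
  /-- the operator `b ⊗ Id^{⊗n} : Z^{⊗(p+n)} → Z^{⊗(q+n)}` for `b : Z^{⊗p} → Z^{⊗q}` -/
  opTensorId : ∀ (p q n : ℕ), (TP p →L[ℂ] TP q) → (TP (p + n) →L[ℂ] TP (q + n))
  opTensorId_apply : ∀ (p q n : ℕ) (b : TP p →L[ℂ] TP q)
      (f : Fin (q + n) → Z) (g : Fin (p + n) → Z),
    ⟪tvec (q + n) f, opTensorId p q n b (tvec (p + n) g)⟫_ℂ =
      ⟪tvec q (fun i => f (Fin.castAdd n i)), b (tvec p (fun i => g (Fin.castAdd n i)))⟫_ℂ *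
        ∏ j : Fin n, ⟪f (Fin.natAdd q j), g (Fin.natAdd p j)⟫_ℂ
  /-- the full Fock space `Γ_±(Z)` -/
  Fock : Type
  [instFockGroup : NormedAddCommGroup Fock]
  [instFockInner : InnerProductSpace ℂ Fock]
  [instFockComplete : CompleteSpace Fock]
  /-- `J n x` is the `n`-particle vector `S_±ⁿ x` inside the Fock space -/
  J : ∀ n, TP n →L[ℂ] Fock
  J_inner : ∀ (n) (x y : TP n),
    ⟪J n x, J n y⟫_ℂ =
      ⟪(n.factorial : ℂ)⁻¹ • ∑ σ : Equiv.Perm (Fin n), permSign fermionic σ • permAct n σ x,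
       (n.factorial : ℂ)⁻¹ • ∑ σ : Equiv.Perm (Fin n), permSign fermionic σ • permAct n σ y⟫_ℂ
  J_orth : ∀ (m n : ℕ), m ≠ n → ∀ (x : TP m) (y : TP n), ⟪J m x, J n y⟫_ℂ = 0
  J_dense : Dense (↑(Submodule.span ℂ (⋃ n, Set.range (J n))) : Set Fock)

attribute [instance] FockFramework.instTPGroup FockFramework.instTPInner
  FockFramework.instTPComplete FockFramework.instFockGroup FockFramework.instFockInner
  FockFramework.instFockComplete

variable {Z : Type} [NormedAddCommGroup Z] [InnerProductSpace ℂ Z] [CompleteSpace Z]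
  {fermionic : Bool}

/-- The (anti)symmetrization projection `S_±ⁿ = (1/n!) Σ_σ s_±(σ) σ·` on `Z^{⊗n}`. -/
def FockFramework.symProj (F : FockFramework fermionic Z) (n : ℕ) : F.TP n →L[ℂ] F.TP n :=
  (n.factorial : ℂ)⁻¹ • ∑ σ : Equiv.Perm (Fin n), permSign fermionic σ • F.permAct n σ

/-- `W` is the `ε`-dependent Wick quantization `b^{Wick}` of
`b ∈ L(S_±^p Z^{⊗p}; S_±^q Z^{⊗q})`, i.e. on the `(n+p)`-particle sector
`b^{Wick} = ε^{(p+q)/2} (√((n+p)!(n+q)!)/n!) S_±^{n+q} (b ⊗ Id^{⊗n}) S_±^{n+p,*}`,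
and `W` vanishes on the sectors with fewer than `p` particles. -/
def IsWickOp (F : FockFramework fermionic Z) (ε : ℝ) (p q : ℕ)
    (b : F.TP p →L[ℂ] F.TP q) (W : F.Fock →L[ℂ] F.Fock) : Prop :=
  (∀ (n : ℕ) (x : F.TP (p + n)),
      W (F.J (p + n) x) =
        ((ε ^ (((p + q : ℕ) : ℝ) / 2) *
            (Real.sqrt (((p + n).factorial * (q + n).factorial : ℕ)) / n.factorial) : ℝ) : ℂ) •
          F.J (q + n) (F.opTensorId p q n b (F.symProj (p + n) x))) ∧
  (∀ m : ℕ, m < p → ∀ x : F.TP m, W (F.J m x) = 0)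

/-- `T` is trace class with trace `t`:  for some Hilbert basis the norms `‖T e_i‖` are
summable, and for every Hilbert basis the diagonal matrix elements sum to `t`. -/
def HasTraceVal {H : Type} [NormedAddCommGroup H] [InnerProductSpace ℂ H]
    (T : H →L[ℂ] H) (t : ℂ) : Prop :=
  (∃ (ι : Type) (bas : HilbertBasis ι ℂ H), Summable fun i => ‖T (bas i)‖) ∧
  (∀ (ι : Type) (bas : HilbertBasis ι ℂ H), HasSum (fun i => ⟪bas i, T (bas i)⟫_ℂ) t)

/-! ### Sums over multisets and products of geometric series -/

theorem hasSum_congr_fun {ι α : Type*} [AddCommMonoid α] [TopologicalSpace α] {f g : ι → α} {a : α}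
    (h : ∀ i, f i = g i) : HasSum f a ↔ HasSum g a := by
  rw [funext h]

/-- Multisets over `insert a T` are obtained uniquely by adding copies of `a` to one over `T`. -/
def multisetInsertEquiv {ι : Type*} [DecidableEq ι] {a : ι} {T : Finset ι} (ha : a ∉ T) :
    ℕ × {s : Multiset ι // ∀ x ∈ s, x ∈ T} ≃ {s : Multiset ι // ∀ x ∈ s, x ∈ insert a T} where
  toFun p := ⟨Multiset.replicate p.1 a + p.2.1, fun x hx => by
    rcases Multiset.mem_add.1 hx with h | h
    · simp [Multiset.eq_of_mem_replicate h]
    · exact Finset.mem_insert_of_mem (p.2.2 x h)⟩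
  invFun s := ⟨s.1.count a, s.1.filter (· ≠ a), fun x hx => by
    obtain ⟨h1, h2⟩ := Multiset.mem_filter.1 hx
    exact Finset.mem_of_mem_insert_of_ne (s.2 x h1) h2⟩
  left_inv := by
    rintro ⟨m, s, hs⟩
    have has : a ∉ s := fun h => ha (hs a h)
    have h2 : s.filter (· ≠ a) = s := Multiset.filter_eq_self.2 fun x hx h => has (h ▸ hx)
    have h3 : (Multiset.replicate m a).filter (· ≠ a) = 0 :=
      Multiset.filter_eq_nil.2 fun x hx h => h (Multiset.eq_of_mem_replicate hx)
    simp only [Multiset.count_add, Multiset.count_replicate_self,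
      Multiset.count_eq_zero_of_notMem has, Multiset.filter_add, h2, h3, add_zero, zero_add]
  right_inv := by
    rintro ⟨s, hs⟩
    ext1
    change Multiset.replicate (s.count a) a + s.filter (· ≠ a) = s
    rw [← Multiset.filter_eq', Multiset.filter_add_not]

/-- Expanding a finite product of geometric series gives the sum of all monomials in the
variables indexed by `T`. -/
theorem multiset_geometric {ι : Type*} [DecidableEq ι] {𝕜 : Type*} [RCLike 𝕜] (x : ι → 𝕜)
    (hx : ∀ i, ‖x i‖ < 1) (T : Finset ι) :
    (Summable fun s : {s : Multiset ι // ∀ y ∈ s, y ∈ T} => ‖(s.1.map x).prod‖) ∧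
    HasSum (fun s : {s : Multiset ι // ∀ y ∈ s, y ∈ T} => (s.1.map x).prod)
      (∏ i ∈ T, (1 - x i)⁻¹) := by
  induction T using Finset.induction_on with
  | empty =>
    have : Unique {s : Multiset ι // ∀ y ∈ s, y ∈ (∅ : Finset ι)} :=
      { default := ⟨0, by simp⟩
        uniq := fun s => Subtype.ext (Multiset.eq_zero_of_forall_notMem fun y hy => by
          simpa using s.2 y hy) }
    have h0 : ∀ s : {s : Multiset ι // ∀ y ∈ s, y ∈ (∅ : Finset ι)}, (s.1.map x).prod = 1 := by
      rintro ⟨s, hs⟩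
      have h : s = 0 := Multiset.eq_zero_of_forall_notMem fun y hy => by simpa using hs y hy
      simp [h]
    refine ⟨Summable.of_finite, ?_⟩
    simp only [h0, Finset.prod_empty]
    exact hasSum_unique _
  | insert a T ha ih =>
    have hfun : ∀ p : ℕ × {s : Multiset ι // ∀ x ∈ s, x ∈ T},
        ((multisetInsertEquiv ha p).1.map x).prod = x a ^ p.1 * (p.2.1.map x).prod := by
      intro p
      change ((Multiset.replicate p.1 a + p.2.1).map x).prod = _
      simp
    have hgeo : Summable fun m : ℕ => ‖x a ^ m‖ := by
      simpa using summable_geometric_of_lt_one (norm_nonneg _) (hx a)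
    have hn : Summable fun p : ℕ × {s : Multiset ι // ∀ x ∈ s, x ∈ T} =>
        ‖x a ^ p.1 * (p.2.1.map x).prod‖ := 
      Summable.mul_norm (f := fun m : ℕ => x a ^ m)
        (g := fun s : {s : Multiset ι // ∀ x ∈ s, x ∈ T} => (s.1.map x).prod) hgeo ih.1
    constructor
    · rw [← (multisetInsertEquiv ha).summable_iff]
      refine hn.congr fun p => ?_
      simp only [Function.comp, hfun]
    · rw [← (multisetInsertEquiv ha).hasSum_iff, Finset.prod_insert ha]
      have := HasSum.mul (f := fun m : ℕ => x a ^ m)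
        (g := fun s : {s : Multiset ι // ∀ x ∈ s, x ∈ T} => (s.1.map x).prod)
        (hasSum_geometric_of_norm_lt_one (hx a)) ih.2 hn.of_norm
      exact (hasSum_congr_fun hfun).2 this

/-- The finite partial sums are dominated by finite subproducts of the convergent product
`∏ (1 - x i)⁻¹`. -/
theorem multiset_summable {ι : Type*} (x : ι → ℝ) (h0 : ∀ i, 0 ≤ x i)
    (hx : ∀ i, x i < 1) (hs : Summable x) :
    Summable fun s : Multiset ι => (s.map x).prod := by
  classical
  have h1 : ∀ i, 0 < 1 - x i := fun i => sub_pos.2 (hx i)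
  have hm : Multipliable fun i => (1 - x i)⁻¹ := by
    refine Real.multipliable_of_summable_log (fun i => inv_pos.2 (h1 i)) ?_
    simp only [Real.log_inv]
    simpa [sub_eq_add_neg] using (Real.summable_log_one_add_of_summable hs.neg).neg
  have hnn : ∀ s : Multiset ι, 0 ≤ (s.map x).prod := fun s =>
    Multiset.prod_nonneg fun a ha => by
      obtain ⟨i, -, rfl⟩ := Multiset.mem_map.1 ha
      exact h0 i
  obtain ⟨r, -, T₀, hr⟩ := hm.eventually_bounded_finsetProd
  refine summable_of_sum_le (c := r) hnn fun U => ?_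
  -- a finite family of multisets only involves a finite set of indices
  set T : Finset ι := T₀ ∪ U.biUnion Multiset.toFinset with hT
  have hU : ∀ s ∈ U, ∀ y ∈ s, y ∈ T := fun s hs y hy =>
    Finset.mem_union_right _ <| Finset.mem_biUnion.2 ⟨s, hs, Multiset.mem_toFinset.2 hy⟩
  have hx' : ∀ i, ‖x i‖ < 1 := fun i => by rw [Real.norm_of_nonneg (h0 i)]; exact hx i
  have hsum := (multiset_geometric x hx' T).2
  calc ∑ s ∈ U, (s.map x).prod
      = ∑ s ∈ U.subtype (fun s => ∀ y ∈ s, y ∈ T), (s.1.map x).prod :=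
        (Finset.sum_subtype_of_mem (fun s : Multiset ι => (s.map x).prod) hU).symm
    _ ≤ ∏ i ∈ T, (1 - x i)⁻¹ := sum_le_hasSum _ (fun s _ => hnn s.1) hsum
    _ ≤ r := hr T Finset.subset_union_left

theorem multiset_summable_norm {ι : Type*} (x : ι → ℂ)
    (hx : ∀ i, ‖x i‖ < 1) (hs : Summable fun i => ‖x i‖) :
    Summable fun s : Multiset ι => ‖(s.map x).prod‖ := by
  refine (multiset_summable (fun i => ‖x i‖) (fun i => norm_nonneg _) hx hs).congr fun s => ?_
  induction s using Multiset.induction_on with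
  | empty => simp
  | cons a s ih => simp [ih]

/-- The generating function identity `∏ (1 - x i)⁻¹ = ∑ s, ∏_{i ∈ s} x i`, the sum running over all
finite multisets. Summability makes the partial sums over multisets supported in `T` converge to
the full sum as `T` grows. -/
theorem hasProd_geometric {ι : Type*} (x : ι → ℂ)
    (hx : ∀ i, ‖x i‖ < 1) (hs : Summable fun i => ‖x i‖) :
    HasProd (fun i => (1 - x i)⁻¹) (∑' s : Multiset ι, (s.map x).prod) := by
  classical
  have hP : ∀ T : Finset ι, ∏ i ∈ T, (1 - x i)⁻¹ =
      ∑' s, Set.indicator {s : Multiset ι | ∀ y ∈ s, y ∈ T} (fun s => (s.map x).prod) s := by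
    intro T
    rw [← (multiset_geometric x hx T).2.tsum_eq]
    exact tsum_subtype {s : Multiset ι | ∀ y ∈ s, y ∈ T} (fun s => (s.map x).prod)
  rw [HasProd, SummationFilter.unconditional_filter]
  simp only [hP]
  refine tendsto_tsum_of_dominated_convergence (multiset_summable_norm x hx hs) ?_ ?_
  · intro s
    refine tendsto_const_nhds.congr' ?_
    filter_upwards [Filter.eventually_ge_atTop s.toFinset] with T hT
    rw [Set.indicator_of_mem]
    exact fun y hy => hT (Multiset.mem_toFinset.2 hy)
  · exact Filter.Eventually.of_forall fun T s => norm_indicator_le_norm_self _ _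

theorem tprod_eq_exp {ι : Type*} (x : ι → ℂ)
    (hx : ∀ i, ‖x i‖ < 1) (hs : Summable fun i => ‖x i‖) :
    ∏' i, (1 - x i)⁻¹ = Complex.exp (-∑' i, Complex.log (1 - x i)) := by
  have hne : ∀ i, 1 - x i ≠ 0 := fun i h => by
    have := hx i
    rw [← sub_eq_zero.1 h] at this
    simp at this
  have harg : ∀ i, (1 - x i).arg ≠ Real.pi := fun i h => by
    have h1 := (Complex.arg_eq_pi_iff.1 h).1
    have h2 := Complex.re_le_norm (x i)
    simp only [Complex.sub_re, Complex.one_re] at h1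
    linarith [hx i]
  have hlog : Summable fun i => Complex.log (1 - x i) := by
    simpa [sub_eq_add_neg] using Complex.summable_log_one_add_of_summable hs.of_norm.neg
  have hinv : ∀ i, Complex.log (1 - x i)⁻¹ = -Complex.log (1 - x i) := fun i =>
    Complex.log_inv _ (harg i)
  rw [← Complex.cexp_tsum_eq_tprod (fun i => inv_ne_zero (hne i))]
  · simp only [hinv, tsum_neg]
  · simpa only [hinv] using hlog.neg

/-! ### Finite sequences and multisets -/

theorem exists_perm_of_ofFn_eq {n : ℕ} {k k' : Fin n → ℕ}
    (h : (List.ofFn k : Multiset ℕ) = List.ofFn k') : ∃ σ : Equiv.Perm (Fin n), k' = k ∘ σ := by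
  have h1 : List.ofFn (k ∘ Tuple.sort k) = List.ofFn (k' ∘ Tuple.sort k') := by
    refine List.Perm.eq_of_pairwise' (r := (· ≤ ·)) ?_ ?_ ?_
    · exact (List.sortedLE_ofFn_iff.2 (Tuple.monotone_sort k)).pairwise
    · exact (List.sortedLE_ofFn_iff.2 (Tuple.monotone_sort k')).pairwise
    · exact (Equiv.Perm.ofFn_comp_perm _ _).trans
        ((Multiset.coe_eq_coe.1 h).trans (Equiv.Perm.ofFn_comp_perm _ _).symm)
  have h2 := List.ofFn_injective h1
  refine ⟨Tuple.sort k * (Tuple.sort k')⁻¹, ?_⟩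
  funext i
  simpa using (congrFun h2 ((Tuple.sort k')⁻¹ i)).symm

theorem ofFn_comp_perm {n : ℕ} (k : Fin n → ℕ) (σ : Equiv.Perm (Fin n)) :
    (List.ofFn (k ∘ σ) : Multiset ℕ) = List.ofFn k :=
  Multiset.coe_eq_coe.2 (Equiv.Perm.ofFn_comp_perm σ k)

theorem exists_ofFn (s : Multiset ℕ) : ∃ k : Fin s.card → ℕ, (List.ofFn k : Multiset ℕ) = s := by
  induction s using Quotient.inductionOn with
  | h l => exact ⟨l.get, by simp⟩

/-! ### Traces of diagonal operators -/

/-- An operator diagonal in some Hilbert basis `b`, with absolutely summable eigenvalues, is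
trace class, and its trace is the sum of the eigenvalues. In another Hilbert basis `u` one has
`⟪u i, T (u i)⟫ = ∑ s, μ s * ‖⟪u i, b s⟫‖ ^ 2`, and by Parseval's identity the double series
over `(s, i)` converges absolutely and may be summed over `i` first. -/
theorem trace_diag {H : Type} [NormedAddCommGroup H] [InnerProductSpace ℂ H] 
    {S : Type} (b : HilbertBasis S ℂ H) (T : H →L[ℂ] H) (μ : S → ℂ)
    (hT : ∀ s, T (b s) = μ s • b s) (hμ : Summable fun s => ‖μ s‖) :
    HasTraceVal T (∑' s, μ s) := by
  refine ⟨⟨S, b, ?_⟩, ?_⟩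
  · refine hμ.congr fun s => ?_
    rw [hT, norm_smul, b.orthonormal.1 s, mul_one]
  intro ι u
  have hparseval : ∀ s, HasSum (fun i => ‖⟪u i, b s⟫_ℂ‖ ^ 2) 1 := fun s => by
    have := u.hasSum_inner_mul_inner (b s) (b s)
    rw [inner_self_eq_one_of_norm_eq_one (b.orthonormal.1 s)] at this
    refine (Complex.hasSum_ofReal.1 ?_)
    rw [Complex.ofReal_one]
    refine (hasSum_congr_fun fun i => ?_).2 this
    rw [← inner_conj_symm (b s) (u i), ← Complex.normSq_eq_conj_mul_self, Complex.normSq_eq_norm_sq]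
  have hexp : ∀ i, HasSum (fun s => μ s * (‖⟪u i, b s⟫_ℂ‖ ^ 2 : ℝ)) ⟪u i, T (u i)⟫_ℂ := fun i => by
    have h1 := ((b.hasSum_repr (u i)).mapL T).mapL (innerSL ℂ (u i))
    refine (hasSum_congr_fun fun s => ?_).2 h1
    simp only [map_smul, hT, innerSL_apply_apply, b.repr_apply_apply]
    rw [← inner_conj_symm (b s) (u i), ← Complex.normSq_eq_norm_sq, Complex.normSq_eq_conj_mul_self]
    ring
  have hsum : Summable fun p : S × ι => μ p.1 * (‖⟪u p.2, b p.1⟫_ℂ‖ ^ 2 : ℝ) := by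
    refine Summable.of_norm ?_
    have hn : ∀ p : S × ι, ‖μ p.1 * (‖⟪u p.2, b p.1⟫_ℂ‖ ^ 2 : ℝ)‖ =
        ‖μ p.1‖ * ‖⟪u p.2, b p.1⟫_ℂ‖ ^ 2 := fun p => by
      simp
    simp only [hn]
    refine (summable_prod_of_nonneg fun p => by positivity).2 ⟨fun s => ?_, ?_⟩
    · exact ((hparseval s).mul_left ‖μ s‖).summable
    · refine hμ.congr fun s => ?_
      exact (((hparseval s).mul_left ‖μ s‖).tsum_eq.trans (mul_one _)).symm
  have htot : HasSum (fun p : S × ι => μ p.1 * (‖⟪u p.2, b p.1⟫_ℂ‖ ^ 2 : ℝ)) (∑' s, μ s) := by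
    have h1 : ∀ s, HasSum (fun i => μ s * (‖⟪u i, b s⟫_ℂ‖ ^ 2 : ℝ)) (μ s) := fun s => by
      simpa using (Complex.hasSum_ofReal.2 (hparseval s)).mul_left (μ s)
    have h2 := hsum.hasSum.prod_fiberwise h1
    rw [h2.tsum_eq]
    exact hsum.hasSum
  exact ((Equiv.prodComm ι S).hasSum_iff.2 htot).prod_fiberwise hexp

/-! ### Elementary tensors -/

namespace FockFramework

variable (F : FockFramework fermionic Z)

theorem norm_tvec (n : ℕ) (f : Fin n → Z) : ‖F.tvec n f‖ = ∏ i, ‖f i‖ := by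
  have h : ((‖F.tvec n f‖ ^ 2 : ℝ) : ℂ) = ((∏ i, ‖f i‖) ^ 2 : ℝ) := by
    have := F.tvec_inner n f f
    simp only [inner_self_eq_norm_sq_to_K] at this
    push_cast
    rw [← Finset.prod_pow]
    exact this
  exact (pow_left_inj₀ (norm_nonneg _) (Finset.prod_nonneg fun i _ => norm_nonneg _)
    two_ne_zero).1 (Complex.ofReal_injective h)

/-- The elementary tensor as a continuous linear function of its `i`-th factor. -/
def tvecCLM (n : ℕ) (f : Fin n → Z) (i : Fin n) : Z →L[ℂ] F.TP n :=
  LinearMap.mkContinuous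
    { toFun := fun z => F.tvec n (Function.update f i z)
      map_add' := F.tvec_add n f i
      map_smul' := F.tvec_smul n f i }
    (∏ j ∈ Finset.univ.erase i, ‖f j‖) fun z => by
      change ‖F.tvec n (Function.update f i z)‖ ≤ _
      rw [norm_tvec, ← Finset.mul_prod_erase _ _ (Finset.mem_univ i), Function.update_self,
        mul_comm]
      refine le_of_eq (congrArg (· * ‖z‖) (Finset.prod_congr rfl fun j hj => ?_))
      rw [Function.update_of_ne (Finset.ne_of_mem_erase hj)]

theorem tvecCLM_apply (n : ℕ) (f : Fin n → Z) (i : Fin n) (z : Z) :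
    F.tvecCLM n f i z = F.tvec n (Function.update f i z) := rfl

/-- A continuous linear map killing all tensor products of basis vectors is zero: the basis
vectors are replaced by arbitrary ones in one slot after another, using linearity and continuity
in each slot. -/
theorem eq_zero_of_basis {E : Type*} [NormedAddCommGroup E] [NormedSpace ℂ E]
    (e : HilbertBasis ℕ ℂ Z) (n : ℕ) (φ : F.TP n →L[ℂ] E)
    (h : ∀ k : Fin n → ℕ, φ (F.tvec n fun i => e (k i)) = 0) : φ = 0 := by
  have key : ∀ (A : Finset (Fin n)) (f : Fin n → Z), (∀ i ∉ A, ∃ m, f i = e m) →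
      φ (F.tvec n f) = 0 := by
    intro A
    induction A using Finset.induction_on with
    | empty =>
      intro f hf
      choose k hk using fun i => hf i (Finset.notMem_empty i)
      rw [show f = fun i => e (k i) from funext hk]
      exact h k
    | insert a A ha ih =>
      intro f hf
      have h0 : φ.comp (F.tvecCLM n f a) = 0 := by
        have hd : Dense (Submodule.span ℂ (Set.range e) : Set Z) :=
          Submodule.dense_iff_topologicalClosure_eq_top.2 e.dense_span
        refine ContinuousLinearMap.ext_on hd ?_
        rintro _ ⟨m, rfl⟩
        refine ih _ fun i hi => ?_
        by_cases hia : i = a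
        · subst hia
          exact ⟨m, Function.update_self _ _ _⟩
        · rw [Function.update_of_ne hia]
          exact hf i (by simp [hia, hi])
      have := DFunLike.congr_fun h0 (f a)
      simpa [tvecCLM_apply] using this
  refine ContinuousLinearMap.ext_on (F.tvec_dense n) ?_
  rintro _ ⟨f, rfl⟩
  exact key Finset.univ f fun i hi => absurd (Finset.mem_univ i) hi

end FockFramework

/-! ### The occupation number basis of the bosonic Fock space -/

namespace FockFramework

variable (F : FockFramework false Z) (e : HilbertBasis ℕ ℂ Z)

/-- The vector `Sⁿ (e_{k 0} ⊗ ⋯ ⊗ e_{k (n-1)})` of the bosonic Fock space. -/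
def basisVec {n : ℕ} (k : Fin n → ℕ) : F.Fock := F.J n (F.tvec n fun i => e (k i))

theorem symProj_tvec {n : ℕ} (f : Fin n → Z) :
    F.symProj n (F.tvec n f) =
      (n.factorial : ℂ)⁻¹ • ∑ σ : Equiv.Perm (Fin n), F.tvec n (f ∘ σ) := by
  simp [symProj, permSign, F.permAct_tvec]

theorem inner_J {n : ℕ} (x y : F.TP n) :
    ⟪F.J n x, F.J n y⟫_ℂ = ⟪F.symProj n x, F.symProj n y⟫_ℂ := by
  rw [F.J_inner]
  simp [symProj]

theorem J_eq_of_symProj_eq {n : ℕ} {x y : F.TP n} (h : F.symProj n x = F.symProj n y) :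
    F.J n x = F.J n y := by
  rw [← sub_eq_zero, ← map_sub, ← inner_self_eq_zero (𝕜 := ℂ), inner_J, map_sub, h, sub_self,
    inner_zero_left]

theorem basisVec_comp_perm {n : ℕ} (k : Fin n → ℕ) (σ : Equiv.Perm (Fin n)) :
    F.basisVec e (k ∘ σ) = F.basisVec e k := by
  refine F.J_eq_of_symProj_eq ?_
  rw [symProj_tvec, symProj_tvec]
  congr 1
  exact Fintype.sum_equiv (Equiv.mulLeft σ) _ _ fun τ => rfl

/-- Symmetrized basis tensors depend only on the multiset of modes, not on their order. -/
theorem basisVec_eq {n m : ℕ} {k : Fin n → ℕ} {k' : Fin m → ℕ}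
    (h : (List.ofFn k : Multiset ℕ) = List.ofFn k') : F.basisVec e k = F.basisVec e k' := by
  have hnm : n = m := by simpa using congrArg Multiset.card h
  subst hnm
  obtain ⟨σ, rfl⟩ := exists_perm_of_ofFn_eq h
  exact (F.basisVec_comp_perm e k σ).symm

theorem inner_tvec_basis {n : ℕ} (k k' : Fin n → ℕ) :
    ⟪F.tvec n fun i => e (k i), F.tvec n fun i => e (k' i)⟫_ℂ = if k = k' then 1 else 0 := by
  rw [F.tvec_inner]
  split_ifs with h
  · subst h
    exact Finset.prod_eq_one fun i _ =>
      inner_self_eq_one_of_norm_eq_one (e.orthonormal.1 (k i))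
  · obtain ⟨i, hi⟩ := Function.ne_iff.1 h
    exact Finset.prod_eq_zero (Finset.mem_univ i) (e.orthonormal.2 hi)

theorem basisVec_orthogonal {n m : ℕ} {k : Fin n → ℕ} {k' : Fin m → ℕ}
    (h : (List.ofFn k : Multiset ℕ) ≠ List.ofFn k') :
    ⟪F.basisVec e k, F.basisVec e k'⟫_ℂ = 0 := by
  by_cases hnm : n = m
  · subst hnm
    have hne : ∀ σ τ : Equiv.Perm (Fin n), k ∘ σ ≠ k' ∘ τ := fun σ τ hστ => h <| by
      rw [← ofFn_comp_perm k σ, hστ, ofFn_comp_perm]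
    rw [basisVec, basisVec, inner_J, symProj_tvec, symProj_tvec, inner_smul_left,
      inner_smul_right, sum_inner]
    simp only [inner_sum]
    have h0 : ∀ σ τ : Equiv.Perm (Fin n),
        ⟪F.tvec n ((fun i => e (k i)) ∘ σ), F.tvec n ((fun i => e (k' i)) ∘ τ)⟫_ℂ = 0 :=
      fun σ τ => (F.inner_tvec_basis e (k ∘ σ) (k' ∘ τ)).trans (if_neg (hne σ τ))
    simp [h0]
  · exact F.J_orth n m hnm _ _

theorem basisVec_ne_zero {n : ℕ} (k : Fin n → ℕ) : F.basisVec e k ≠ 0 := by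
  intro h
  have hS : F.symProj n (F.tvec n fun i => e (k i)) = 0 := by
    rw [← inner_self_eq_zero (𝕜 := ℂ), ← inner_J]
    rw [basisVec] at h
    rw [h, inner_zero_left]
  rw [symProj_tvec, smul_eq_zero_iff_right (by simp [Nat.factorial_ne_zero])] at hS
  -- the coefficient of the original tensor counts the permutations fixing `k`
  have h1 : ∑ σ : Equiv.Perm (Fin n), (if k = k ∘ σ then 1 else 0 : ℂ) = 0 := by
    have := congrArg (fun y => ⟪F.tvec n (fun i => e (k i)), y⟫_ℂ) hS
    simp only [inner_sum, inner_zero_right] at this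
    refine Eq.trans ?_ this
    exact Finset.sum_congr rfl fun σ _ => (F.inner_tvec_basis e k (k ∘ σ)).symm
  rw [Finset.sum_boole, Nat.cast_eq_zero, Finset.card_eq_zero] at h1
  have h2 : (1 : Equiv.Perm (Fin n)) ∈
      (Finset.univ.filter fun σ : Equiv.Perm (Fin n) => k = k ∘ σ) := by
    simp
  rw [h1] at h2
  exact Finset.notMem_empty _ h2

theorem eq_zero_of_inner_basisVec {w : F.Fock}
    (h : ∀ (n : ℕ) (k : Fin n → ℕ), ⟪w, F.basisVec e k⟫_ℂ = 0) : w = 0 := by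
  have hJ : ∀ n, (innerSL ℂ w).comp (F.J n) = 0 := fun n =>
    F.eq_zero_of_basis e n _ fun k => h n k
  have h0 : innerSL ℂ w = 0 := by
    refine ContinuousLinearMap.ext_on F.J_dense ?_
    rintro y hy
    obtain ⟨n, x, rfl⟩ := Set.mem_iUnion.1 hy
    exact DFunLike.congr_fun (hJ n) x
  have := DFunLike.congr_fun h0 w
  exact inner_self_eq_zero.1 this

/-- An enumeration (with multiplicity, in some order) of a multiset of occupied modes. -/
def modes (s : Multiset ℕ) : Fin s.card → ℕ := (exists_ofFn s).choose

theorem ofFn_modes (s : Multiset ℕ) : (List.ofFn (modes s) : Multiset ℕ) = s :=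
  (exists_ofFn s).choose_spec

/-- The normalized occupation number vector attached to the multiset `s` of occupied modes. -/
def occVec (s : Multiset ℕ) : F.Fock :=
  ((‖F.basisVec e (modes s)‖⁻¹ : ℝ) : ℂ) • F.basisVec e (modes s)

theorem orthonormal_occVec : Orthonormal ℂ (F.occVec e) := by
  refine ⟨fun s => ?_, fun s t hst => ?_⟩
  · rw [occVec, norm_smul, Complex.norm_real, norm_inv, norm_norm]
    exact inv_mul_cancel₀ (norm_ne_zero_iff.2 (F.basisVec_ne_zero e _))
  · change ⟪F.occVec e s, F.occVec e t⟫_ℂ = 0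
    rw [occVec, occVec, inner_smul_left, inner_smul_right, F.basisVec_orthogonal e, mul_zero,
      mul_zero]
    rwa [ofFn_modes, ofFn_modes]

/-- The occupation number basis of the bosonic Fock space, indexed by multisets of modes. -/
def occBasis : HilbertBasis (Multiset ℕ) ℂ F.Fock :=
  HilbertBasis.mkOfOrthogonalEqBot (F.orthonormal_occVec e) <| by
    refine (Submodule.eq_bot_iff _).2 fun w hw => F.eq_zero_of_inner_basisVec e fun n k => ?_
    have h1 := (Submodule.mem_orthogonal' _ w).1 hw (F.occVec e (List.ofFn k))
      (Submodule.subset_span ⟨_, rfl⟩)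
    rw [occVec, inner_smul_right, mul_eq_zero] at h1
    rw [F.basisVec_eq e (ofFn_modes (List.ofFn k)).symm]
    refine h1.resolve_left ?_
    refine Complex.ofReal_ne_zero.2 ?_
    exact inv_ne_zero (norm_ne_zero_iff.2 (F.basisVec_ne_zero e _))

theorem occBasis_apply (s : Multiset ℕ) : F.occBasis e s = F.occVec e s := by
  rw [occBasis, HilbertBasis.coe_mkOfOrthogonalEqBot]

/-- The occupation number vector of modes `s` is an eigenvector of `Γ₊(C)`, with eigenvalue the
product of the eigenvalues of `C` over the occupied modes. -/
theorem secondQuantization_occBasis {C : Z →L[ℂ] Z} {lam : ℕ → ℂ}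
    (heig : ∀ n, C (e n) = lam n • e n)
    {Tpow : ∀ n, F.TP n →L[ℂ] F.TP n}
    (hTpow : ∀ (n : ℕ) (f g : Fin n → Z),
      ⟪F.tvec n f, Tpow n (F.tvec n g)⟫_ℂ = ∏ i, ⟪f i, C (g i)⟫_ℂ)
    {G : F.Fock →L[ℂ] F.Fock}
    (hG : ∀ (n : ℕ) (x : F.TP n), G (F.J n x) = F.J n (Tpow n x)) (s : Multiset ℕ) :
    G (F.occBasis e s) = (s.map lam).prod • F.occBasis e s := by
  have hT : ∀ (n : ℕ) (k : Fin n → ℕ), Tpow n (F.tvec n fun i => e (k i)) =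
      (∏ i, lam (k i)) • F.tvec n fun i => e (k i) := by
    intro n k
    -- both sides have the same inner product with every elementary tensor
    have h0 : innerSL ℂ (Tpow n (F.tvec n fun i => e (k i)) -
        (∏ i, lam (k i)) • F.tvec n fun i => e (k i)) = 0 := by
      refine ContinuousLinearMap.ext_on (F.tvec_dense n) ?_
      rintro _ ⟨f, rfl⟩
      change ⟪_, F.tvec n f⟫_ℂ = 0
      rw [← inner_conj_symm, inner_sub_right, hTpow, inner_smul_right, F.tvec_inner]
      simp only [heig, inner_smul_right, Finset.prod_mul_distrib, sub_self, map_zero]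
    exact sub_eq_zero.1 (inner_self_eq_zero.1 (DFunLike.congr_fun h0 _))
  have hs : (s.map lam).prod = ∏ i, lam (modes s i) := by
    conv_lhs => rw [← ofFn_modes s]
    rw [Multiset.map_coe, List.map_ofFn, Multiset.prod_coe, List.prod_ofFn]
    rfl
  rw [occBasis_apply, occVec, map_smul, basisVec, hG, hT, map_smul, hs, smul_comm]

end FockFramework

/-- For a self-adjoint trace-class operator `C` with `‖C‖ < 1`, diagonalized by an
orthonormal basis `(e_n)` with summable eigenvalues `(λ_n)`, the bosonic second
quantization `Γ₊(C)` (acting as `C^{⊗n}` on the symmetrized `n`-particle sector) is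
trace class on the bosonic Fock space, and
`Tr[Γ₊(C)] = Π_n 1/(1−λ_n) = exp(−Tr[log(1−C)]) = exp(−Σ_n log(1−λ_n))`. -/
theorem trace_bosonic_secondQuantization_selfAdjoint
    (F : FockFramework false Z)
    (C : Z →L[ℂ] Z) (hC : IsSelfAdjoint C) (hCnorm : ‖C‖ < 1)
    (lam : ℕ → ℝ) (e : HilbertBasis ℕ ℂ Z)
    (heig : ∀ n, C (e n) = (lam n : ℂ) • e n) (hTC : Summable lam)
    (Tpow : ∀ n, F.TP n →L[ℂ] F.TP n)
    (hTpow : ∀ (n : ℕ) (f g : Fin n → Z),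
      ⟪F.tvec n f, Tpow n (F.tvec n g)⟫_ℂ = ∏ i, ⟪f i, C (g i)⟫_ℂ)
    (G : F.Fock →L[ℂ] F.Fock)
    (hG : ∀ (n : ℕ) (x : F.TP n), G (F.J n x) = F.J n (Tpow n x)) :
    HasTraceVal G (∏' n : ℕ, (1 - (lam n : ℂ))⁻¹) ∧
    (∏' n : ℕ, (1 - (lam n : ℂ))⁻¹)
      = Complex.exp (-∑' n : ℕ, Complex.log (1 - (lam n : ℂ))) := by
  have hlt : ∀ n, ‖(lam n : ℂ)‖ < 1 := fun n => by
    have h := C.le_opNorm (e n)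
    rw [heig, norm_smul, e.orthonormal.1 n, mul_one, mul_one] at h
    exact h.trans_lt hCnorm
  have hsum : Summable fun n => ‖(lam n : ℂ)‖ := by
    simpa only [Complex.norm_real] using hTC.norm
  refine ⟨?_, tprod_eq_exp _ hlt hsum⟩
  rw [(hasProd_geometric _ hlt hsum).tprod_eq]
  exact trace_diag (F.occBasis e) G _ (F.secondQuantization_occBasis e heig hTpow hG)
    (multiset_summable_norm _ hlt hsum)

end
end
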